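/- arXiv:1602.08021 — 2 statements merged into one kernel-verified Lean document; each statement's English description precedes it below -/
import Mathlib

section
/- Let (Ω, F, P) be a probability space, let (X_n)_{n∈ℕ} be an increasing sequence of sub-sigma-algebras of F, and let (v_n)_{n∈ℕ}, (χ_n)_{n∈ℕ}, (η_n)_{n∈ℕ}, (θ_n)_{n∈ℕ} be sequences of nonnegative integrable random variables such that v_n, χ_n, η_n, θ_n are X_n-measurable for every n, Σ_n χ_n < +∞ P-a.s., Σ_n η_n < +∞ P-a.s., and E[v_{n+1} | X_n] ≤ (1 + χ_n) v_n + η_n − θ_n P-a.s. for every n. Then Σ_{n∈ℕ} θ_n < +∞ P-a.s. and (v_n)_{n∈ℕ} converges P-a.s. to a [0,+∞[-valued random variable. -/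
open MeasureTheory Filter Topology

/-- A supermartingale bounded below by a constant converges almost surely. -/
theorem aux_superm {Ω : Type*} {mΩ : MeasurableSpace Ω} (P : Measure Ω) [IsProbabilityMeasure P]
    (ℱ : Filtration ℕ mΩ) (Z : ℕ → Ω → ℝ) (hZ : Supermartingale Z ℱ P) (M : ℝ)
    (hM : ∀ n ω, -M ≤ Z n ω) (hM0 : 0 ≤ M) :
    ∀ᵐ ω ∂P, ∃ c, Tendsto (fun n => Z n ω) atTop (𝓝 c) := by
  have hb : ∀ n, eLpNorm ((-Z) n) 1 P ≤ ((∫ ω, Z 0 ω ∂P + 2 * M).toNNReal : ENNReal) := by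
    intro n
    have h1 : ∫ ω, Z n ω ∂P ≤ ∫ ω, Z 0 ω ∂P := by
      have := hZ.setIntegral_le (Nat.zero_le n) MeasurableSet.univ
      simpa using this
    have h2 : ∫ ω, ‖Z n ω‖ ∂P ≤ ∫ ω, Z 0 ω ∂P + 2 * M := by
      have : ∫ ω, ‖Z n ω‖ ∂P ≤ ∫ ω, (Z n ω + 2 * M) ∂P := by
        refine integral_mono (hZ.integrable n).norm ((hZ.integrable n).add (integrable_const _)) ?_
        intro ω
        have := hM n ω
        simp only [Real.norm_eq_abs]
        rw [abs_le]
        constructor <;> linarith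
      rw [integral_add (hZ.integrable n) (integrable_const _)] at this
      simp at this
      simp
      linarith
    rw [Pi.neg_apply, eLpNorm_neg, eLpNorm_one_eq_lintegral_enorm,
      ← ofReal_integral_norm_eq_lintegral_enorm (hZ.integrable n)]
    exact ENNReal.ofReal_le_ofReal h2
  filter_upwards [hZ.neg.exists_ae_tendsto_of_bdd hb] with ω ⟨c, hc⟩
  refine ⟨-c, ?_⟩
  simpa using hc.neg

/-- Robbins-Siegmund after multiplication by a predictable decreasing weight. -/
theorem aux_weighted
    {Ω : Type*} {mΩ : MeasurableSpace Ω} (P : Measure Ω) [IsProbabilityMeasure P]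
    (ℱ : Filtration ℕ mΩ)
    (v χ η θ g : ℕ → Ω → ℝ)
    (hvpos : ∀ n ω, 0 ≤ v n ω)
    (hηpos : ∀ n ω, 0 ≤ η n ω) (hθpos : ∀ n ω, 0 ≤ θ n ω)
    (hvint : ∀ n, Integrable (v n) P)
    (hηint : ∀ n, Integrable (η n) P) (hθint : ∀ n, Integrable (θ n) P)
    (hvmeas : ∀ n, Measurable[ℱ n] (v n))
    (hηmeas : ∀ n, Measurable[ℱ n] (η n)) (hθmeas : ∀ n, Measurable[ℱ n] (θ n))
    (hrec : ∀ n, ∀ᵐ ω ∂P,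
      (P[v (n + 1) | ℱ n]) ω ≤ (1 + χ n ω) * v n ω + η n ω - θ n ω)
    (hg0 : ∀ n ω, 0 ≤ g n ω) (hg1 : ∀ n ω, g n ω ≤ 1)
    (hgm : ∀ n, Measurable[ℱ n] (g n)) (hgm' : ∀ n, Measurable[ℱ n] (g (n + 1)))
    (hgχ : ∀ n ω, g (n + 1) ω * (1 + χ n ω) ≤ g n ω)
    (M : ℝ) (hM0 : 0 ≤ M) (hM : ∀ n ω, ∑ k ∈ Finset.range n, g (k + 1) ω * η k ω ≤ M) :
    ∀ᵐ ω ∂P, (Summable fun n => g (n + 1) ω * θ n ω) ∧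
      ∃ c, Tendsto (fun n => g n ω * v n ω) atTop (𝓝 c) := by
  have hmul : ∀ (m _n : ℕ) (f : Ω → ℝ), Integrable f P → Integrable (fun ω => g m ω * f ω) P := by
    intro m n f hf
    refine hf.bdd_mul (c := 1) ((hgm m).mono (ℱ.le m) le_rfl).aestronglyMeasurable ?_
    refine Eventually.of_forall fun ω => ?_
    rw [Real.norm_eq_abs, abs_of_nonneg (hg0 m ω)]
    exact hg1 m ω
  let D : ℕ → Ω → ℝ := fun n ω => ∑ k ∈ Finset.range n, g (k + 1) ω * (θ k ω - η k ω)
  have hDint : ∀ n, Integrable (D n) P := fun n =>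
    integrable_finsetSum _ fun k _ => hmul (k + 1) k _ ((hθint k).sub (hηint k))
  have hDm' : ∀ n, Measurable[ℱ n] (D (n + 1)) := by
    intro n
    refine Finset.measurable_fun_sum _ fun k hk => ?_
    have hkn : k ≤ n := by have := Finset.mem_range.1 hk; omega
    exact ((hgm' k).mul ((hθmeas k).sub (hηmeas k))).mono (ℱ.mono hkn) le_rfl
  have hDm : ∀ n, Measurable[ℱ n] (D n) := by
    intro n
    cases n with
    | zero => simp only [D, Finset.range_zero, Finset.sum_empty]; exact measurable_const
    | succ n => exact (hDm' n).mono (ℱ.mono (Nat.le_succ n)) le_rfl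
  let Z : ℕ → Ω → ℝ := fun n ω => g n ω * v n ω + D n ω
  have hZ : Supermartingale Z ℱ P := by
    refine supermartingale_nat ?_ (fun n => (hmul n n _ (hvint n)).add (hDint n)) ?_
    · intro n
      exact (((hgm n).mul (hvmeas n)).add (hDm n)).stronglyMeasurable
    · intro n
      have e1 : P[Z (n + 1) | ℱ n] =ᵐ[P] P[g (n+1) * v (n+1) | ℱ n] + P[D (n+1) | ℱ n] :=
        condExp_add (hmul (n+1) n _ (hvint (n+1))) (hDint (n+1)) _
      have e2 : P[D (n+1) | ℱ n] = D (n+1) :=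
        condExp_of_stronglyMeasurable (ℱ.le n) (hDm' n).stronglyMeasurable (hDint (n+1))
      have e3 : P[g (n+1) * v (n+1) | ℱ n] =ᵐ[P] g (n+1) * P[v (n+1) | ℱ n] :=
        condExp_mul_of_stronglyMeasurable_left (hgm' n).stronglyMeasurable
          (hmul (n+1) n _ (hvint (n+1))) (hvint (n+1))
      filter_upwards [e1, e3, hrec n] with ω h1 h3 hr
      rw [h1, Pi.add_apply, e2, h3, Pi.mul_apply]
      have h4 := mul_le_mul_of_nonneg_left hr (hg0 (n+1) ω)
      have h5 := mul_le_mul_of_nonneg_right (hgχ n ω) (hvpos n ω)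
      have h6 : D (n+1) ω = D n ω + g (n+1) ω * (θ n ω - η n ω) := Finset.sum_range_succ _ _
      simp only [Z]
      rw [h6]
      nlinarith
  have hDsplit : ∀ n ω, D n ω = ∑ k ∈ Finset.range n, g (k + 1) ω * θ k ω
      - ∑ k ∈ Finset.range n, g (k + 1) ω * η k ω := by
    intro n ω
    simp only [D, mul_sub, Finset.sum_sub_distrib]
  have hT0 : ∀ n ω, 0 ≤ ∑ k ∈ Finset.range n, g (k + 1) ω * θ k ω := fun n ω =>
    Finset.sum_nonneg fun k _ => mul_nonneg (hg0 _ _) (hθpos _ _)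
  have hconv := aux_superm P ℱ Z hZ M (by
    intro n ω
    have a1 := hT0 n ω
    have a2 := hM n ω
    have a3 := mul_nonneg (hg0 n ω) (hvpos n ω)
    simp only [Z, hDsplit]
    linarith) hM0
  filter_upwards [hconv] with ω ⟨c, hc⟩
  have hS : Summable fun n => g (n + 1) ω * η n ω :=
    summable_of_sum_range_le (fun n => mul_nonneg (hg0 _ _) (hηpos _ _)) (fun n => hM n ω)
  obtain ⟨B, hB⟩ := hc.bddAbove_range
  have hT : Summable fun n => g (n + 1) ω * θ n ω := by
    refine summable_of_sum_range_le (c := B + M)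
      (fun n => mul_nonneg (hg0 _ _) (hθpos _ _)) (fun n => ?_)
    have a1 : Z n ω ≤ B := hB ⟨n, rfl⟩
    have a2 := hM n ω
    have a3 := mul_nonneg (hg0 n ω) (hvpos n ω)
    simp only [Z, hDsplit] at a1
    linarith
  refine ⟨hT, _, ((hc.sub hT.hasSum.tendsto_sum_nat).add hS.hasSum.tendsto_sum_nat).congr ?_⟩
  intro n
  simp only [Z, hDsplit]
  ring

theorem stmt6
    {Ω : Type*} [mΩ : MeasurableSpace Ω] (P : Measure Ω) [IsProbabilityMeasure P]
    (𝒳 : ℕ → MeasurableSpace Ω)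
    (h𝒳le : ∀ n, 𝒳 n ≤ mΩ)
    (h𝒳mono : ∀ n, 𝒳 n ≤ 𝒳 (n + 1))
    (v χ η θ : ℕ → Ω → ℝ)
    (hvpos : ∀ n ω, 0 ≤ v n ω) (hχpos : ∀ n ω, 0 ≤ χ n ω)
    (hηpos : ∀ n ω, 0 ≤ η n ω) (hθpos : ∀ n ω, 0 ≤ θ n ω)
    (hvint : ∀ n, Integrable (v n) P) (hχint : ∀ n, Integrable (χ n) P)
    (hηint : ∀ n, Integrable (η n) P) (hθint : ∀ n, Integrable (θ n) P)
    (hvmeas : ∀ n, Measurable[𝒳 n] (v n)) (hχmeas : ∀ n, Measurable[𝒳 n] (χ n))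
    (hηmeas : ∀ n, Measurable[𝒳 n] (η n)) (hθmeas : ∀ n, Measurable[𝒳 n] (θ n))
    (hχsum : ∀ᵐ ω ∂P, Summable fun n => χ n ω)
    (hηsum : ∀ᵐ ω ∂P, Summable fun n => η n ω)
    (hrec : ∀ n, ∀ᵐ ω ∂P,
      (P[v (n + 1) | 𝒳 n]) ω ≤ (1 + χ n ω) * v n ω + η n ω - θ n ω) :
    (∀ᵐ ω ∂P, Summable fun n => θ n ω) ∧
    ∃ vlim : Ω → ℝ, Measurable vlim ∧ (∀ ω, 0 ≤ vlim ω) ∧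
      ∀ᵐ ω ∂P, Filter.Tendsto (fun n => v n ω) Filter.atTop (nhds (vlim ω)) := by
  let ℱ : Filtration ℕ mΩ := ⟨𝒳, monotone_nat_of_le_succ h𝒳mono, h𝒳le⟩
  have hmono : Monotone 𝒳 := monotone_nat_of_le_succ h𝒳mono
  let b : ℕ → Ω → ℝ := fun n ω => ∏ k ∈ Finset.range n, (1 + χ k ω)⁻¹
  have hb0 : ∀ n ω, 0 < b n ω := fun n ω => Finset.prod_pos fun k _ => by
    have := hχpos k ω
    positivity
  have hbs : ∀ n ω, b (n + 1) ω = b n ω * (1 + χ n ω)⁻¹ := fun n ω => Finset.prod_range_succ _ _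
  have hbχ : ∀ n ω, b (n + 1) ω * (1 + χ n ω) = b n ω := fun n ω => by
    have := hχpos n ω
    rw [hbs]
    field_simp
  have hbanti : ∀ ω, Antitone fun n => b n ω := fun ω => antitone_nat_of_succ_le fun n => by
    have h1 := hbχ n ω
    have h2 := mul_nonneg (hb0 (n + 1) ω).le (hχpos n ω)
    linarith
  have hb1 : ∀ n ω, b n ω ≤ 1 := fun n ω => by
    have := hbanti ω (Nat.zero_le n)
    simpa [b] using this
  have hbm' : ∀ n, Measurable[𝒳 n] (b (n + 1)) := by
    intro n
    refine Finset.measurable_fun_prod _ fun k hk => ?_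
    have hkn : k ≤ n := by have := Finset.mem_range.1 hk; omega
    exact (((hχmeas k).const_add 1).inv).mono (hmono hkn) le_rfl
  let H : ℕ → Ω → ℝ := fun n ω => ∑ k ∈ Finset.range n, η k ω
  have hHm' : ∀ n, Measurable[𝒳 n] (H (n + 1)) := by
    intro n
    refine Finset.measurable_fun_sum _ fun k hk => ?_
    have hkn : k ≤ n := by have := Finset.mem_range.1 hk; omega
    exact (hηmeas k).mono (hmono hkn) le_rfl
  have hHs : ∀ n ω, H (n + 1) ω = H n ω + η n ω := fun n ω => Finset.sum_range_succ _ _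
  let g : ℕ → ℕ → Ω → ℝ := fun M n ω => if H n ω ≤ (M : ℝ) then b n ω else 0
  have hg0 : ∀ M n ω, 0 ≤ g M n ω := fun M n ω => by
    simp only [g]
    split_ifs
    · exact (hb0 n ω).le
    · exact le_rfl
  have hgb : ∀ M n ω, g M n ω ≤ b n ω := fun M n ω => by
    simp only [g]
    split_ifs
    · exact le_rfl
    · exact (hb0 n ω).le
  have hgm' : ∀ M n, Measurable[𝒳 n] (g M (n + 1)) := fun M n =>
    Measurable.ite (measurableSet_le (hHm' n) measurable_const) (hbm' n) measurable_const
  have hgm : ∀ M n, Measurable[𝒳 n] (g M n) := fun M n => by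
    cases n with
    | zero =>
      have : g M 0 = fun _ => (1 : ℝ) := by
        funext ω
        simp [g, H, b]
      rw [this]
      exact measurable_const
    | succ n => exact (hgm' M n).mono (hmono (Nat.le_succ n)) le_rfl
  have hgχ : ∀ M n ω, g M (n + 1) ω * (1 + χ n ω) ≤ g M n ω := fun M n ω => by
    by_cases h : H (n + 1) ω ≤ (M : ℝ)
    · have h' : H n ω ≤ (M : ℝ) := by
        have h1 := hHs n ω
        have h2 := hηpos n ω
        linarith
      simp only [g, if_pos h, if_pos h']
      exact (hbχ n ω).le
    · have : g M (n + 1) ω = 0 := if_neg h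
      rw [this, zero_mul]
      exact hg0 M n ω
  have hgM : ∀ M n ω, ∑ k ∈ Finset.range n, g M (k + 1) ω * η k ω ≤ (M : ℝ) := fun M n ω => by
    induction n with
    | zero => simp
    | succ n ih =>
      by_cases h : H (n + 1) ω ≤ (M : ℝ)
      · refine le_trans (Finset.sum_le_sum fun k _ => ?_) h
        have h1 : g M (k + 1) ω ≤ 1 := (hgb M _ ω).trans (hb1 _ ω)
        exact mul_le_of_le_one_left (hηpos k ω) h1
      · have : g M (n + 1) ω = 0 := if_neg h
        rw [Finset.sum_range_succ, this, zero_mul, add_zero]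
        exact ih
  have key : ∀ᵐ ω ∂P, ∀ M : ℕ, (Summable fun n => g M (n + 1) ω * θ n ω) ∧
      ∃ c, Tendsto (fun n => g M n ω * v n ω) atTop (𝓝 c) := ae_all_iff.2 fun M =>
    aux_weighted P ℱ v χ η θ (g M) hvpos hηpos hθpos hvint hηint hθint hvmeas hηmeas hθmeas hrec
      (hg0 M) (fun n ω => (hgb M n ω).trans (hb1 n ω)) (hgm M) (hgm' M) (hgχ M) M
      (Nat.cast_nonneg M) (hgM M)
  have main : ∀ᵐ ω ∂P, (Summable fun n => θ n ω) ∧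
      ∃ c, Tendsto (fun n => v n ω) atTop (𝓝 c) := by
    filter_upwards [key, hχsum, hηsum] with ω hk hχ hη
    obtain ⟨M, hM⟩ := exists_nat_ge (∑' n, η n ω)
    have hgeq : ∀ n, g M n ω = b n ω := fun n =>
      if_pos ((hη.sum_le_tsum _ fun k _ => hηpos k ω).trans hM)
    obtain ⟨hθ, c, hc⟩ := hk M
    simp only [hgeq] at hθ hc
    have hlow : ∀ n, Real.exp (-∑' n, χ n ω) ≤ b n ω := fun n => by
      calc Real.exp (-∑' n, χ n ω) ≤ Real.exp (∑ k ∈ Finset.range n, -χ k ω) := by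
            rw [Finset.sum_neg_distrib]
            exact Real.exp_le_exp.2 (neg_le_neg (hχ.sum_le_tsum _ fun k _ => hχpos k ω))
        _ = ∏ k ∈ Finset.range n, Real.exp (-χ k ω) := Real.exp_sum _ _
        _ ≤ b n ω := Finset.prod_le_prod (fun k _ => (Real.exp_pos _).le) fun k _ => by
            rw [Real.exp_neg]
            have h1 := hχpos k ω
            have h2 := Real.add_one_le_exp (χ k ω)
            exact inv_anti₀ (by linarith) (by linarith)
    have hpos := Real.exp_pos (-∑' n, χ n ω)
    constructor
    · refine Summable.of_nonneg_of_le (fun n => hθpos n ω) (fun n => ?_)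
        (hθ.mul_left (Real.exp (-∑' n, χ n ω))⁻¹)
      rw [inv_mul_eq_div, le_div_iff₀ hpos, mul_comm]
      exact mul_le_mul_of_nonneg_right (hlow (n + 1)) (hθpos n ω)
    · have hbl : Tendsto (fun n => b n ω) atTop (𝓝 (⨅ n, b n ω)) :=
        tendsto_atTop_ciInf (hbanti ω) ⟨_, by rintro _ ⟨n, rfl⟩; exact hlow n⟩
      have hne : (⨅ n, b n ω) ≠ 0 := (hpos.trans_le (le_ciInf hlow)).ne'
      refine ⟨_, (hc.div hbl hne).congr fun n => ?_⟩
      have := (hb0 n ω).ne'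
      simp only [Pi.div_apply]
      field_simp
  refine ⟨main.mono fun ω h => h.1, ?_⟩
  obtain ⟨l, hlm, hl⟩ := measurable_limit_of_tendsto_metrizable_ae
    (fun n => (hvint n).aemeasurable) (main.mono fun ω h => h.2)
  refine ⟨fun ω => max (l ω) 0, hlm.max measurable_const, fun ω => le_max_right _ _, ?_⟩
  filter_upwards [hl] with ω h
  have : 0 ≤ l ω := ge_of_tendsto' h fun n => hvpos n ω
  rw [max_eq_left this]
  exact h
end

section
/- Consider Problem 1 (deterministic setting). Let (λ_n)_{n∈ℕ} be a sequence in ]0,1] with inf_n λ_n > 0, let (γ_n)_{n∈ℕ} be a sequence in ]0, 2ϑ[ with inf_n γ_n > 0 and sup_n γ_n < 2ϑ, let x_0 ∈ H, and define x_{n+1} = x_n + λ_n ( prox_{γ_n f}( x_n − γ_n ∇g(x_n) ) − x_n ) for every n ∈ ℕ. Then (x_n)_{n∈ℕ} converges to a point in F, the set of minimizers of f + g. -/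
open Filter Topology

noncomputable section

/-- `f` is a proper lower semicontinuous convex function from `H` to `]-∞,+∞]`. -/
def ProperLscConvex {H : Type*} [NormedAddCommGroup H] [InnerProductSpace ℝ H]
    (f : H → EReal) : Prop :=
  (∀ x, f x ≠ ⊥) ∧ (∃ x, f x ≠ ⊤) ∧ LowerSemicontinuous f ∧
    ∀ x y : H, ∀ a b : ℝ, 0 ≤ a → 0 ≤ b → a + b = 1 →
      f (a • x + b • y) ≤ (a : EReal) * f x + (b : EReal) * f y

/-- `p` is the unique minimizer of `y ↦ f y + (1/(2γ))‖x - y‖²`, i.e. `p = prox_{γ f} x`. -/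
def IsProx {H : Type*} [NormedAddCommGroup H] [InnerProductSpace ℝ H]
    (f : H → EReal) (γ : ℝ) (x p : H) : Prop :=
  (∀ y, f p + ((1 / (2 * γ) * ‖x - p‖ ^ 2 : ℝ) : EReal)
      ≤ f y + ((1 / (2 * γ) * ‖x - y‖ ^ 2 : ℝ) : EReal)) ∧
  ∀ p' : H, (∀ y, f p' + ((1 / (2 * γ) * ‖x - p'‖ ^ 2 : ℝ) : EReal)
      ≤ f y + ((1 / (2 * γ) * ‖x - y‖ ^ 2 : ℝ) : EReal)) → p' = p

theorem aux_slope (φ : ℝ → ℝ) (d c : ℝ) (hd : HasDerivAt φ d 0)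
    (h : ∀ t, 0 < t → t ≤ 1 → φ t - φ 0 ≤ t * c) : d ≤ c := by
  have h1 := hd.tendsto_slope_zero_right
  refine le_of_tendsto h1 ?_
  have : Set.Ioc (0:ℝ) 1 ∈ 𝓝[>] (0:ℝ) := Ioc_mem_nhdsGT one_pos
  filter_upwards [this] with t ht
  have := h t ht.1 ht.2
  rw [zero_add, smul_eq_mul, inv_mul_le_iff₀ ht.1]
  exact this

theorem aux_line {H : Type*} [NormedAddCommGroup H] [InnerProductSpace ℝ H] [CompleteSpace H]
    (q : H → ℝ) (v z w : H) (t : ℝ) (hq : HasGradientAt q v (z + t • w)) :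
    HasDerivAt (fun s : ℝ => q (z + s • w)) (inner ℝ v w) t := by
  have h1 : HasDerivAt (fun s : ℝ => z + s • w) w t := by
    simpa using ((hasDerivAt_id t).smul_const w).const_add z
  have h2 := hq.hasFDerivAt.comp_hasDerivAt t h1
  have h3 : (InnerProductSpace.toDual ℝ H v) w = inner ℝ v w := by simp
  rw [← h3]
  exact h2

theorem aux_opt {H : Type*} [NormedAddCommGroup H] [InnerProductSpace ℝ H] [CompleteSpace H]
    (f : H → EReal) (hf : ProperLscConvex f) (q : H → ℝ) (v z : H)
    (hq : HasGradientAt q v z)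
    (hz : ∀ y, f z + (q z : EReal) ≤ f y + (q y : EReal)) :
    ∃ a : ℝ, f z = a ∧ ∀ y, ∀ b : ℝ, f y = b → a ≤ b + inner ℝ v (y - z) := by
  obtain ⟨hb, ⟨y0, hy0⟩, -, hc⟩ := hf
  have hzt : f z ≠ ⊤ := by
    intro h
    have := hz y0
    rw [h, EReal.top_add_coe, top_le_iff] at this
    lift f y0 to ℝ using ⟨hy0, hb y0⟩ with b
    exact EReal.coe_ne_top _ (by exact_mod_cast this)
  obtain ⟨a, ha⟩ : ∃ a : ℝ, f z = a := ⟨(f z).toReal, (EReal.coe_toReal hzt (hb z)).symm⟩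
  refine ⟨a, ha, fun y b hy => ?_⟩
  have hq0 : HasGradientAt q v (z + (0:ℝ) • (y - z)) := by simpa using hq
  have hd := (aux_line q v z (y - z) 0 hq0).neg
  have := aux_slope _ _ (b - a) hd (fun t ht0 ht1 => by
    have h1 := hc y z t (1 - t) ht0.le (by linarith) (by ring)
    have e : t • y + (1 - t) • z = z + t • (y - z) := by module
    rw [e, hy, ha] at h1
    have h2 := (hz (z + t • (y - z))).trans (add_le_add_left h1 _)
    rw [ha] at h2
    have h3 : a + q z ≤ t * b + (1 - t) * a + q (z + t • (y - z)) := by exact_mod_cast h2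
    simp only [Pi.neg_apply, zero_smul, add_zero]
    linarith)
  linarith

theorem aux_grad_ineq {H : Type*} [NormedAddCommGroup H] [InnerProductSpace ℝ H] [CompleteSpace H]
    (g : H → ℝ) (hgconv : ConvexOn ℝ Set.univ g) (v x : H) (hg : HasGradientAt g v x) (y : H) :
    g x + inner ℝ v (y - x) ≤ g y := by
  have hq0 : HasGradientAt g v (x + (0:ℝ) • (y - x)) := by simpa using hg
  have hd := aux_line g v x (y - x) 0 hq0
  have := aux_slope _ _ (g y - g x) hd (fun t ht0 ht1 => by
    have h1 := hgconv.2 (Set.mem_univ y) (Set.mem_univ x) ht0.le (by linarith : 0 ≤ 1 - t) (by ring)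
    have e : t • y + (1 - t) • x = x + t • (y - x) := by module
    rw [e] at h1
    simp only [smul_eq_mul] at h1
    simp only [zero_smul, add_zero]
    linarith)
  linarith

theorem aux_descent {H : Type*} [NormedAddCommGroup H] [InnerProductSpace ℝ H] [CompleteSpace H]
    (g : H → ℝ) (g' : H → H) (hg' : ∀ x, HasGradientAt g (g' x) x) (L : ℝ)
    (hL : ∀ x y, ‖g' x - g' y‖ ≤ L * ‖x - y‖) (x w : H) :
    g (x + w) ≤ g x + inner ℝ (g' x) w + L / 2 * ‖w‖ ^ 2 := by
  have hd : ∀ t : ℝ, HasDerivAt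
      (fun s : ℝ => g (x + s • w) - s * inner ℝ (g' x) w - s ^ 2 * (L / 2 * ‖w‖ ^ 2))
      (inner ℝ (g' (x + t • w)) w - inner ℝ (g' x) w - (2 * t) * (L / 2 * ‖w‖ ^ 2)) t := by
    intro t
    have h1 := aux_line g _ x w t (hg' _)
    have h2 : HasDerivAt (fun s : ℝ => s * inner ℝ (g' x) w) (inner ℝ (g' x) w) t := by
      simpa using (hasDerivAt_id t).mul_const (inner ℝ (g' x) w : ℝ)
    have h3 : HasDerivAt (fun s : ℝ => s ^ 2 * (L / 2 * ‖w‖ ^ 2)) (2 * t * (L / 2 * ‖w‖ ^ 2)) t := by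
      simpa using (hasDerivAt_pow 2 t).mul_const (L / 2 * ‖w‖ ^ 2)
    exact (h1.sub h2).sub h3
  have hanti := antitoneOn_of_hasDerivWithinAt_nonpos (convex_Icc (0:ℝ) 1)
    (fun t _ => (hd t).continuousAt.continuousWithinAt)
    (fun t _ => (hd t).hasDerivWithinAt) (fun t ht => by
      rw [interior_Icc] at ht
      have h1 := real_inner_le_norm (g' (x + t • w) - g' x) w
      have h2 := hL (x + t • w) x
      rw [add_sub_cancel_left, norm_smul, Real.norm_of_nonneg ht.1.le] at h2
      have h3 := mul_le_mul_of_nonneg_right h2 (norm_nonneg w)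
      rw [inner_sub_left] at h1
      nlinarith)
  have := hanti (Set.left_mem_Icc.2 zero_le_one) (Set.right_mem_Icc.2 zero_le_one) zero_le_one
  simp at this
  linarith

theorem aux_half {H : Type*} [NormedAddCommGroup H] [InnerProductSpace ℝ H] [CompleteSpace H]
    (g : H → ℝ) (hgconv : ConvexOn ℝ Set.univ g)
    (g' : H → H) (hg' : ∀ x, HasGradientAt g (g' x) x) (θ : ℝ) (hθ : 0 < θ)
    (hL : ∀ x y, ‖g' x - g' y‖ ≤ θ⁻¹ * ‖x - y‖) (x z : H) :
    g z + inner ℝ (g' z) (x - z) + θ / 2 * ‖g' x - g' z‖ ^ 2 ≤ g x := by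
  have h1 := aux_descent g g' hg' _ hL x (-(θ • (g' x - g' z)))
  have h2 := aux_grad_ineq g hgconv _ z (hg' z) (x + -(θ • (g' x - g' z)))
  have e : x + -(θ • (g' x - g' z)) - z = (x - z) - θ • (g' x - g' z) := by module
  rw [e, inner_sub_right, inner_smul_right] at h2
  rw [norm_neg, norm_smul, inner_neg_right, inner_smul_right, Real.norm_of_nonneg hθ.le] at h1
  have e2 : θ⁻¹ / 2 * (θ * ‖g' x - g' z‖) ^ 2 = θ / 2 * ‖g' x - g' z‖ ^ 2 := by
    field_simp
  rw [e2] at h1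
  have e3 : inner ℝ (g' x) (g' x - g' z) - inner ℝ (g' z) (g' x - g' z)
      = ‖g' x - g' z‖ ^ 2 := by
    rw [← inner_sub_left, real_inner_self_eq_norm_sq]
  rw [← e3] at h1 ⊢
  linarith

theorem aux_prox {H : Type*} [NormedAddCommGroup H] [InnerProductSpace ℝ H] [CompleteSpace H]
    (f : H → EReal) (hf : ProperLscConvex f) (γ : ℝ) (w p : H) (h : IsProx f γ w p) :
    ∃ a : ℝ, f p = a ∧ ∀ y, ∀ b : ℝ, f y = b → a ≤ b + inner ℝ (γ⁻¹ • (p - w)) (y - p) := by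
  refine aux_opt f hf (fun y => 1 / (2 * γ) * ‖w - y‖ ^ 2) _ p ?_ h.1
  rw [hasGradientAt_iff_hasFDerivAt]
  have h1 : HasFDerivAt (fun y : H => w - y) (-ContinuousLinearMap.id ℝ H) p :=
    (hasFDerivAt_id p).const_sub w
  have h2 := (h1.norm_sq).const_mul (1 / (2 * γ))
  refine h2.congr_fderiv ?_
  ext y
  simp [inner_sub_left, inner_smul_left]
  ring

theorem aux_fejer {H : Type*} [NormedAddCommGroup H] [InnerProductSpace ℝ H] [CompleteSpace H]
    (f : H → EReal) (hf : ProperLscConvex f) (ϑ : ℝ) (hϑ : 0 < ϑ)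
    (g : H → ℝ) (hgconv : ConvexOn ℝ Set.univ g)
    (g' : H → H) (hg' : ∀ x, HasGradientAt g (g' x) x)
    (hL : ∀ x y, ‖g' x - g' y‖ ≤ ϑ⁻¹ * ‖x - y‖)
    (z : H) (hz : ∀ y : H, f z + (g z : EReal) ≤ f y + (g y : EReal))
    (γ l : ℝ) (hγ : 0 < γ) (hl0 : 0 ≤ l) (hl1 : l ≤ 1) (x p : H)
    (hp : IsProx f γ (x - γ • g' x) p) :
    ‖x + l • (p - x) - z‖ ^ 2 ≤ ‖x - z‖ ^ 2 - l * (1 - γ / (2 * ϑ)) * ‖x - p‖ ^ 2 := by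
  obtain ⟨a, ha, h1⟩ := aux_opt f hf g _ z (hg' z) hz
  obtain ⟨b, hb, h2⟩ := aux_prox f hf γ _ p hp
  have h3 := h1 p b hb
  have h4 := h2 z a ha
  have h5 := aux_half g hgconv g' hg' ϑ hϑ hL x z
  have h6 := aux_half g hgconv g' hg' ϑ hϑ hL z x
  rw [norm_sub_rev (g' z)] at h6
  obtain ⟨u, hu⟩ : ∃ u, u = g' x - g' z := ⟨_, rfl⟩
  have hx : g' x = u + g' z := by rw [hu]; abel
  obtain ⟨d, hd⟩ : ∃ d, d = x - p := ⟨_, rfl⟩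
  obtain ⟨e, he⟩ : ∃ e, e = p - z := ⟨_, rfl⟩
  have hxz : x - z = d + e := by rw [hd, he]; abel
  have hzx : z - x = -(d + e) := by rw [hd, he]; abel
  have hzp : z - p = -e := by rw [he]; abel
  have hpw : p - (x - γ • g' x) = γ • (u + g' z) - d := by rw [← hx, hd]; abel
  have hnew : x + l • (p - x) - z = e + (1 - l) • d := by rw [hd, he]; module
  rw [← hu, hxz] at h5
  rw [← hu, hzx, hx] at h6
  rw [← he] at h3
  rw [hzp, hpw, inner_smul_left] at h4
  rw [hnew, hxz, ← hd]
  simp only [inner_neg_right, inner_add_left, inner_add_right, inner_sub_left, inner_smul_left,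
    RCLike.conj_to_real] at h3 h4 h5 h6
  have h7 : γ * (b - a) ≤ inner ℝ d e - γ * (inner ℝ u e + inner ℝ (g' z) e) := by
    have := mul_le_mul_of_nonneg_left h4 hγ.le
    have e1 : γ * (a + γ⁻¹ * -(γ * (inner ℝ u e + inner ℝ (g' z) e) - inner ℝ d e)) =
      γ * a + (inner ℝ d e - γ * (inner ℝ u e + inner ℝ (g' z) e)) := by
      field_simp
      ring
    linarith
  have h8 : ϑ * ‖u‖ ^ 2 ≤ inner ℝ u d + inner ℝ u e := by linarith
  have h9 : 0 ≤ ϑ * ‖u‖ ^ 2 - inner ℝ u d + ‖d‖ ^ 2 / (4 * ϑ) := by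
    have := real_inner_le_norm u d
    have h : 0 ≤ (2 * ϑ * ‖u‖ - ‖d‖) ^ 2 / (4 * ϑ) := by positivity
    have e : (2 * ϑ * ‖u‖ - ‖d‖) ^ 2 / (4 * ϑ)
      = ϑ * ‖u‖ ^ 2 - ‖u‖ * ‖d‖ + ‖d‖ ^ 2 / (4 * ϑ) := by field_simp; ring
    linarith
  have h10 : -(γ / (4 * ϑ) * ‖d‖ ^ 2) ≤ inner ℝ d e := by
    have i1 : 0 ≤ γ * (inner ℝ u e + ‖d‖ ^ 2 / (4 * ϑ)) :=
      mul_nonneg hγ.le (by linarith)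
    have e : γ / (4 * ϑ) * ‖d‖ ^ 2 = γ * (‖d‖ ^ 2 / (4 * ϑ)) := by ring
    have i2 := mul_le_mul_of_nonneg_left h3 hγ.le
    linarith
  rw [norm_add_sq_real, norm_add_sq_real, norm_smul, inner_smul_right, mul_pow, Real.norm_eq_abs,
    sq_abs, real_inner_comm d e]
  have e : γ / (2 * ϑ) = 2 * (γ / (4 * ϑ)) := by field_simp; ring
  rw [e]
  nlinarith [mul_le_mul_of_nonneg_left h10 hl0, mul_nonneg (mul_nonneg hl0 (sub_nonneg.2 hl1)) (sq_nonneg ‖d‖)]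

theorem stmt8
    {H : Type*} [NormedAddCommGroup H] [InnerProductSpace ℝ H] [FiniteDimensional ℝ H]
    -- Problem 1 data
    (f : H → EReal) (hf : ProperLscConvex f)
    (ϑ : ℝ) (hϑ : 0 < ϑ)
    (g : H → ℝ) (hgconv : ConvexOn ℝ Set.univ g)
    (g' : H → H) (hg' : ∀ x, HasGradientAt g (g' x) x)
    (hglip : LipschitzWith (Real.toNNReal ϑ⁻¹) g')
    (F : Set H) (hF : F = {z : H | ∀ y : H, f z + (g z : EReal) ≤ f y + (g y : EReal)})
    (hFne : F.Nonempty)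
    -- deterministic forward-backward iteration
    (lam γ : ℕ → ℝ)
    (hlam : ∀ n, lam n ∈ Set.Ioc (0 : ℝ) 1)
    (hlaminf : ∃ ε > (0 : ℝ), ∀ n, ε ≤ lam n)
    (hγ : ∀ n, γ n ∈ Set.Ioo (0 : ℝ) (2 * ϑ))
    (hγinf : ∃ ε > (0 : ℝ), ∀ n, ε ≤ γ n)
    (hγsup : ∃ c < 2 * ϑ, ∀ n, γ n ≤ c)
    (proxf : ℕ → H → H) (hproxf : ∀ n y, IsProx f (γ n) y (proxf n y))
    (x : ℕ → H)
    (hrec : ∀ n, x (n + 1)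
        = x n + lam n • (proxf n (x n - γ n • g' (x n)) - x n)) :
    ∃ xlim ∈ F, Filter.Tendsto x Filter.atTop (nhds xlim) := by
  have hL : ∀ x y, ‖g' x - g' y‖ ≤ ϑ⁻¹ * ‖x - y‖ := by
    intro x y
    have := hglip.norm_sub_le x y
    rwa [Real.coe_toNNReal _ (inv_nonneg.2 hϑ.le)] at this
  obtain ⟨l0, hl0, hl⟩ := hlaminf
  obtain ⟨γ0, hγ0, hγl⟩ := hγinf
  obtain ⟨c, hc, hγc⟩ := hγsup
  obtain ⟨p, hpdef⟩ : ∃ p : ℕ → H, ∀ n, p n = proxf n (x n - γ n • g' (x n)) := ⟨_, fun _ => rfl⟩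
  have hp : ∀ n, IsProx f (γ n) (x n - γ n • g' (x n)) (p n) := fun n => by
    rw [hpdef]; exact hproxf _ _
  have hδ : 0 < 1 - c / (2 * ϑ) := by
    rw [sub_pos, div_lt_one (by positivity)]; exact hc
  have key : ∀ z ∈ F, ∀ n, ‖x (n + 1) - z‖ ^ 2 ≤
      ‖x n - z‖ ^ 2 - l0 * (1 - c / (2 * ϑ)) * ‖x n - p n‖ ^ 2 := by
    intro z hz n
    rw [hF] at hz
    have := aux_fejer f hf ϑ hϑ g hgconv g' hg' hL z hz (γ n) (lam n) (hγ n).1 (hlam n).1.le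
      (hlam n).2 (x n) (p n) (hp n)
    rw [hrec, ← hpdef]
    refine this.trans ?_
    have h1 : 1 - c / (2 * ϑ) ≤ 1 - γ n / (2 * ϑ) := by
      have := hγc n
      gcongr
    have h2 : l0 * (1 - c / (2 * ϑ)) ≤ lam n * (1 - γ n / (2 * ϑ)) :=
      mul_le_mul (hl n) h1 hδ.le (hlam n).1.le
    have := mul_le_mul_of_nonneg_right h2 (sq_nonneg ‖x n - p n‖)
    linarith
  have hκ : 0 < l0 * (1 - c / (2 * ϑ)) := mul_pos hl0 hδ
  generalize l0 * (1 - c / (2 * ϑ)) = κ at key hκ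
  have hanti : ∀ z ∈ F, Antitone (fun n => ‖x n - z‖ ^ 2) := fun z hz =>
    antitone_nat_of_succ_le fun n => by
      have := key z hz n
      have := mul_nonneg hκ.le (sq_nonneg ‖x n - p n‖)
      linarith
  obtain ⟨z, hz⟩ := hFne
  -- residuals tend to zero
  have hres : Tendsto (fun n => x n - p n) atTop (𝓝 0) := by
    have hlim := tendsto_atTop_ciInf (hanti z hz) ⟨0, by rintro _ ⟨n, rfl⟩; positivity⟩
    have hlim1 := hlim.comp (tendsto_add_atTop_nat 1)
    have hdiff := (hlim.sub hlim1).const_mul κ⁻¹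
    rw [sub_self, mul_zero] at hdiff
    have hsq : Tendsto (fun n => ‖x n - p n‖ ^ 2) atTop (𝓝 0) := by
      refine squeeze_zero (fun n => by positivity) (fun n => ?_) hdiff
      have := key z hz n
      rw [← div_eq_inv_mul, le_div_iff₀ hκ]
      simp only [Function.comp_apply]
      linarith
    have := hsq.sqrt
    simp only [Real.sqrt_sq (norm_nonneg _), Real.sqrt_zero] at this
    exact tendsto_zero_iff_norm_tendsto_zero.2 this
  -- cluster point
  have hbdd : ∀ n, x n ∈ Metric.closedBall z ‖x 0 - z‖ := fun n => by
    rw [mem_closedBall_iff_norm]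
    exact (sq_le_sq₀ (norm_nonneg _) (norm_nonneg _)).1 (hanti z hz (Nat.zero_le n))
  haveI : ProperSpace H := FiniteDimensional.proper ℝ H
  obtain ⟨xs, -, k, hk, hxk⟩ := (isCompact_closedBall z ‖x 0 - z‖).tendsto_subseq hbdd
  have hresk := hres.comp hk.tendsto_atTop
  have hpk : Tendsto (p ∘ k) atTop (𝓝 xs) := by
    have := hxk.sub hresk
    rw [sub_zero] at this
    refine this.congr fun n => ?_
    simp
  have hgk : Tendsto (fun n => g' (x (k n))) atTop (𝓝 (g' xs)) :=
    (hglip.continuous.tendsto xs).comp hxk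
  have hrγ : Tendsto (fun n => (γ (k n))⁻¹ • (x (k n) - p (k n))) atTop (𝓝 0) := by
    refine squeeze_zero_norm (a := fun n => γ0⁻¹ * ‖x (k n) - p (k n)‖) (fun n => ?_) ?_
    · rw [norm_smul, norm_inv, Real.norm_of_nonneg (hγ _).1.le]
      have := hγl (k n)
      gcongr
    · simpa using (hresk.norm).const_mul γ0⁻¹
  have hsub : ∀ y, ∀ b : ℝ, f y = b → f xs ≤ ((b + inner ℝ (g' xs) (y - xs) : ℝ) : EReal) := by
    intro y b hy
    have hT : Tendsto (fun n => b + inner ℝ (g' (x (k n)) - (γ (k n))⁻¹ • (x (k n) - p (k n)))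
        (y - p (k n))) atTop (𝓝 (b + inner ℝ (g' xs) (y - xs))) := by
      have := ((hgk.sub hrγ).inner (𝕜 := ℝ) (hpk.const_sub y)).const_add b
      simpa using this
    by_contra hlt
    rw [not_le] at hlt
    obtain ⟨r, hr1, hr2⟩ := EReal.lt_iff_exists_real_btwn.1 hlt
    have ev1 := hpk.eventually (hf.2.2.1 xs r hr2)
    have ev2 := hT.eventually (gt_mem_nhds (EReal.coe_lt_coe_iff.1 hr1))
    obtain ⟨n, hn1, hn2⟩ := (ev1.and ev2).exists
    obtain ⟨a, ha, h2⟩ := aux_prox f hf _ _ _ (hp (k n))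
    have h3 := h2 y b hy
    simp only [Function.comp_apply] at hn1
    rw [ha, gt_iff_lt, EReal.coe_lt_coe_iff] at hn1
    have e : (γ (k n))⁻¹ • (p (k n) - (x (k n) - γ (k n) • g' (x (k n))))
        = g' (x (k n)) - (γ (k n))⁻¹ • (x (k n) - p (k n)) := by
      have : γ (k n) ≠ 0 := (hγ _).1.ne'
      rw [← sub_add, smul_add, smul_smul, inv_mul_cancel₀ this]
      module
    rw [e] at h3
    linarith
  have hxsF : xs ∈ F := by
    rw [hF]
    intro y
    by_cases hy : f y = ⊤
    · rw [hy, EReal.top_add_coe]; exact le_top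
    obtain ⟨b, hb⟩ : ∃ b : ℝ, f y = b := ⟨(f y).toReal, (EReal.coe_toReal hy (hf.1 y)).symm⟩
    have h1 := hsub y b hb
    have h2 := aux_grad_ineq g hgconv _ xs (hg' xs) y
    rw [hb]
    refine (add_le_add_left h1 _).trans ?_
    norm_cast
    linarith
  refine ⟨xs, hxsF, ?_⟩
  have hlim := tendsto_atTop_ciInf (hanti xs hxsF) ⟨0, by rintro _ ⟨n, rfl⟩; positivity⟩
  have hsq0 : Tendsto (fun n => ‖x (k n) - xs‖ ^ 2) atTop (𝓝 0) := by
    have := ((hxk.sub_const xs).norm).pow 2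
    simpa using this
  have := tendsto_nhds_unique (hlim.comp hk.tendsto_atTop) hsq0
  rw [this] at hlim
  have := hlim.sqrt
  simp only [Real.sqrt_sq (norm_nonneg _), Real.sqrt_zero] at this
  exact tendsto_iff_norm_sub_tendsto_zero.2 this
end
end
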